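/- There do not exist real-valued functions σ, τ of a real variable ρ such that: (i) for all sufficiently large ρ, σ is differentiable at ρ with σ(ρ) > 0 and τ is differentiable at ρ with τ(ρ) ≠ 0; and, as ρ → +∞, (ii) τ(ρ) → 0, (iii) σ(ρ)/ρ → 0, (iv) σ(ρ)/(ρ·τ(ρ)) → 0, (v) ρ·σ′(ρ)/σ(ρ) → 0, and (vi) ρ²·τ′(ρ)/σ(ρ) → 0. -/

import Mathlib

/-!
Put `g ρ = σ ρ / ρ`. Then `g' = (σ / ρ²) (ρ σ' / σ - 1)`, so `g'` is eventually negative and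
`τ' / g' = (ρ² τ' / σ) / (ρ σ' / σ - 1) → 0 / (-1) = 0`. Since `τ` and `g` both tend to `0`,
L'Hôpital's rule gives `τ / g → 0`. But `g / τ → 0` as well, while the product of these two
quotients is eventually `1`.
-/

open Filter Topology

/-- There do not exist real-valued functions `σ, τ` of a real variable `ρ`
such that: (i) for all sufficiently large `ρ`, `σ` is differentiable at `ρ` with `σ ρ > 0`
and `τ` is differentiable at `ρ` with `τ ρ ≠ 0`; and, as `ρ → +∞`,
(ii) `τ ρ → 0`, (iii) `σ ρ / ρ → 0`, (iv) `σ ρ / (ρ * τ ρ) → 0`,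
(v) `ρ * σ' ρ / σ ρ → 0`, and (vi) `ρ ^ 2 * τ' ρ / σ ρ → 0`. -/
theorem no_such_sigma_tau :
    ¬ ∃ σ τ : ℝ → ℝ,
      (∀ᶠ ρ in atTop, DifferentiableAt ℝ σ ρ ∧ 0 < σ ρ ∧
        DifferentiableAt ℝ τ ρ ∧ τ ρ ≠ 0) ∧
      Tendsto τ atTop (𝓝 0) ∧
      Tendsto (fun ρ => σ ρ / ρ) atTop (𝓝 0) ∧
      Tendsto (fun ρ => σ ρ / (ρ * τ ρ)) atTop (𝓝 0) ∧
      Tendsto (fun ρ => ρ * deriv σ ρ / σ ρ) atTop (𝓝 0) ∧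
      Tendsto (fun ρ => ρ ^ 2 * deriv τ ρ / σ ρ) atTop (𝓝 0) := by
  rintro ⟨σ, τ, hev, hτ, hg, hgτ, hσ', hτ'⟩
  have hden : Tendsto (fun ρ => ρ * deriv σ ρ / σ ρ - 1) atTop (𝓝 (-1)) := by
    simpa using hσ'.sub_const 1
  have hneg : ∀ᶠ ρ in atTop, ρ * deriv σ ρ / σ ρ - 1 < 0 :=
    hden.eventually_lt_const (by norm_num)
  have hder : ∀ᶠ ρ in atTop, HasDerivAt (fun ρ => σ ρ / ρ)
      (σ ρ / ρ ^ 2 * (ρ * deriv σ ρ / σ ρ - 1)) ρ := by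
    filter_upwards [hev, eventually_gt_atTop 0] with ρ ⟨hd, hpos, _, _⟩ hρ
    refine (hd.hasDerivAt.div (hasDerivAt_id ρ) hρ.ne').congr_deriv ?_
    simp only [id, mul_one]
    field_simp
  have hlim : Tendsto (fun ρ => τ ρ / (σ ρ / ρ)) atTop (𝓝 0) := by
    refine HasDerivAt.lhopital_zero_atTop (f' := deriv τ) ?_ hder ?_ hτ hg ?_
    · filter_upwards [hev] with ρ h using h.2.2.1.hasDerivAt
    · filter_upwards [hev, hneg, eventually_gt_atTop 0] with ρ h hn hρ
      exact mul_ne_zero (div_pos h.2.1 (by positivity)).ne' hn.ne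
    · have hquot : Tendsto
          (fun ρ => ρ ^ 2 * deriv τ ρ / σ ρ / (ρ * deriv σ ρ / σ ρ - 1)) atTop (𝓝 0) := by
        simpa only [zero_div, Pi.div_def] using hτ'.div hden (by norm_num)
      refine hquot.congr' ?_
      filter_upwards with ρ
      rw [← div_div, div_div_eq_mul_div, mul_comm (ρ ^ 2)]
  have hprod : Tendsto (fun ρ => τ ρ / (σ ρ / ρ) * (σ ρ / (ρ * τ ρ))) atTop (𝓝 0) := by
    simpa using hlim.mul hgτ
  have hone : Tendsto (fun ρ => τ ρ / (σ ρ / ρ) * (σ ρ / (ρ * τ ρ))) atTop (𝓝 1) := by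
    refine tendsto_const_nhds.congr' ?_
    filter_upwards [hev, eventually_gt_atTop 0] with ρ ⟨_, hpos, _, hne⟩ hρ
    field_simp
  exact zero_ne_one (tendsto_nhds_unique hprod hone)
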